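/- Sufficient interpolation conditions with function values: let d ≥ 1, n ≥ 0, μ > 0, L > 0, and let (x_i, f_i, g_i) for i = 0, …, n be triples in ℝ^d × ℝ × ℝ^d with the points x_i pairwise distinct. Suppose there exists a nonempty closed convex set X* ⊆ ℝ^d such that for all i: ‖g_i‖ ≤ L‖x_i − x_i^*‖, ⟨g_i, x_i − x_i^*⟩ ≥ μ‖x_i − x_i^*‖², and f_i = ((μ+L)/4)·‖x_i − x_i^*‖², where x_i^* is the orthogonal projection of x_i onto X*. Then there exists a differentiable function f : ℝ^d → ℝ in RSI⁻(μ) ∩ EB⁺(L) such that ∇f(x_i) = g_i and f(x_i) = f_i for all i. -/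

import Mathlib

noncomputable section

open RealInnerProductSpace

/-- The set of global minimizers of `f`. -/
def argminSet {d : ℕ} (f : EuclideanSpace ℝ (Fin d) → ℝ) :
    Set (EuclideanSpace ℝ (Fin d)) := {z | ∀ y, f z ≤ f y}

/-- `p` is the orthogonal projection map onto the set `X` : for each `x`, `p x` is a
nearest point to `x` in `X`. -/
def IsProjOn {d : ℕ} (p : EuclideanSpace ℝ (Fin d) → EuclideanSpace ℝ (Fin d))
    (X : Set (EuclideanSpace ℝ (Fin d))) : Prop :=
  ∀ x, p x ∈ X ∧ ∀ y ∈ X, ‖x - p x‖ ≤ ‖x - y‖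

/-- `f` is a differentiable function, whose set of global minimizers is nonempty, closed
and convex, belonging to `RSI⁻(μ) ∩ EB⁺(L)`. -/
def MemRSIEB {d : ℕ} (μ L : ℝ) (f : EuclideanSpace ℝ (Fin d) → ℝ) : Prop :=
  Differentiable ℝ f ∧ (argminSet f).Nonempty ∧ IsClosed (argminSet f) ∧
    Convex ℝ (argminSet f) ∧
    ∃ p, IsProjOn p (argminSet f) ∧
      (∀ x, μ * ‖x - p x‖ ^ 2 ≤ ⟪gradient f x, x - p x⟫) ∧
      (∀ x, ‖gradient f x‖ ≤ L * ‖x - p x‖)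

theorem radial_aux (C A R : ℝ) (hC : 0 < C) (hA : 0 ≤ A) (hR : 0 < R) (hCR : C * R ≤ 1 / 2) :
    ∃ k k' : ℝ → ℝ, Continuous k ∧ k 0 = 1 ∧ (∀ q, 0 < q → HasDerivAt k (k' q) q) ∧
      (∀ q, 0 ≤ k q ∧ k q ≤ 1 ∨ q < 0) ∧
      (∀ q, R ^ 2 ≤ q → k q = 0 ∧ k' q = 0) ∧
      (∀ r, 0 < r → r < R → C * (r + A * (r ^ 2 * |k' (r ^ 2)|)) ≤ 1 - k (r ^ 2)) := by
  obtain ⟨ρ, hρ, hρR, hρC⟩ : ∃ ρ, 0 < ρ ∧ ρ = R ∧ C * ρ ≤ 1 / 2 := ⟨R, hR, rfl, hCR⟩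
  obtain ⟨β, hβ, hβ2, hβC⟩ : ∃ β, 0 < β ∧ β ≤ 1 / 2 ∧ C * (A * (2 * β)) ≤ 1 / 2 := by
    refine ⟨min (1 / 2) (1 / (4 * C * (A + 1))), by positivity, min_le_left _ _, ?_⟩
    calc C * (A * (2 * min (1 / 2) (1 / (4 * C * (A + 1)))))
        ≤ C * ((A + 1) * (2 * (1 / (4 * C * (A + 1))))) := by
          gcongr
          · linarith
          · exact min_le_right _ _
      _ = 1 / 2 := by field_simp; norm_num
  have hT : ∀ t : ℝ, HasDerivAt (fun t : ℝ => (max t 0) ^ 2) (2 * max t 0) t := by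
    intro t
    rcases lt_trichotomy t 0 with ht | ht | ht
    · have : (fun t : ℝ => (max t 0) ^ 2) =ᶠ[nhds t] fun _ => 0 := by
        filter_upwards [gt_mem_nhds ht] with y hy
        simp [max_eq_right hy.le]
      simpa [max_eq_right ht.le] using (hasDerivAt_const t (0:ℝ)).congr_of_eventuallyEq this
    · subst ht
      simp only [max_self, mul_zero]
      rw [hasDerivAt_iff_isLittleO]
      simp only [max_self, sub_zero, smul_zero]
      have : (fun x : ℝ => (max x 0) ^ 2 - 0 ^ 2) =O[nhds 0] fun x : ℝ => x ^ 2 := by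
        refine Asymptotics.IsBigO.of_bound 1 (Filter.Eventually.of_forall fun x => ?_)
        rw [Real.norm_eq_abs, Real.norm_eq_abs, one_mul]
        rcases le_total x 0 with h | h <;> simp [h, sq_nonneg]
      exact this.trans_isLittleO (Asymptotics.isLittleO_pow_id (by norm_num))
    · have : (fun t : ℝ => (max t 0) ^ 2) =ᶠ[nhds t] fun t => t ^ 2 := by
        filter_upwards [lt_mem_nhds ht] with y hy
        simp [max_eq_left hy.le]
      simpa [max_eq_left ht.le] using (hasDerivAt_pow 2 t).congr_of_eventuallyEq this
  refine ⟨fun q => (max (1 - (q / ρ ^ 2) ^ β) 0) ^ 2,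
    fun q => 2 * max (1 - (q / ρ ^ 2) ^ β) 0 * (-(1 / ρ ^ 2 * β * (q / ρ ^ 2) ^ (β - 1))),
    ?_, ?_, ?_, ?_, ?_, ?_⟩
  · have : Continuous fun q : ℝ => (q / ρ ^ 2) ^ β :=
      (continuous_id.div_const _).rpow_const (fun _ => Or.inr hβ.le)
    fun_prop
  · simp [Real.zero_rpow hβ.ne']
  · intro q hq
    have hs : 0 < q / ρ ^ 2 := by positivity
    have h1 : HasDerivAt (fun q : ℝ => q / ρ ^ 2) (1 / ρ ^ 2) q := (hasDerivAt_id q).div_const _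
    have h2 := h1.rpow_const (p := β) (Or.inl hs.ne')
    have h3 := h2.const_sub 1
    exact (hT _).comp q h3
  · intro q
    rcases lt_or_ge q 0 with h | h
    · exact Or.inr h
    · left
      have : 0 ≤ (q / ρ ^ 2) ^ β := by positivity
      refine ⟨by positivity, pow_le_one₀ (le_max_right _ _) (max_le (by linarith) (by norm_num))⟩
  · intro q hq
    have : 1 ≤ (q / ρ ^ 2) ^ β := by
      apply Real.one_le_rpow _ hβ.le
      rw [le_div_iff₀ (by positivity), one_mul]
      rw [hρR]; exact hq
    have h0 : max (1 - (q / ρ ^ 2) ^ β) 0 = 0 := max_eq_right (by linarith)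
    simp [h0]
  · intro r hr hrR
    set s := r ^ 2 / ρ ^ 2 with hs
    have hs0 : 0 < s := by positivity
    set m := s ^ β with hm
    have hm0 : 0 < m := by positivity
    have hk' : r ^ 2 * |2 * max (1 - m) 0 * (-(1 / ρ ^ 2 * β * s ^ (β - 1)))|
        = 2 * β * m * max (1 - m) 0 := by
      rw [abs_mul, abs_neg, abs_of_nonneg (by positivity), abs_of_nonneg (by positivity)]
      rw [Real.rpow_sub_one hs0.ne', ← hm, hs]
      field_simp
    simp only
    rw [hk']
    have hs1 : s ≤ 1 := by
      rw [hs, div_le_one (by positivity), hρR]; gcongr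
    have hm1 : m ≤ 1 := Real.rpow_le_one hs0.le hs1 hβ.le
    have hrm : r ≤ ρ * m := by
      have e1 : s ^ (1 / 2 : ℝ) = r / ρ := by
        rw [← Real.sqrt_eq_rpow, hs, ← div_pow, Real.sqrt_sq (by positivity)]
      have e2 : s ^ (1 / 2 : ℝ) ≤ m := Real.rpow_le_rpow_of_exponent_ge hs0 hs1 hβ2
      rw [e1, div_le_iff₀ hρ] at e2
      linarith
    have hmm : max (1 - m) 0 = 1 - m := max_eq_left (by linarith)
    rw [hmm]
    have a1 : C * r ≤ 1 / 2 * m := by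
      calc C * r ≤ C * (ρ * m) := by gcongr
        _ = (C * ρ) * m := by ring
        _ ≤ _ := by gcongr
    have a2 : C * (A * (2 * β * m * (1 - m))) ≤ 1 / 2 * m := by
      calc C * (A * (2 * β * m * (1 - m))) = (C * (A * (2 * β))) * (m * (1 - m)) := by ring
        _ ≤ (1 / 2) * (m * 1) := by
          apply mul_le_mul hβC _ (by apply mul_nonneg hm0.le; linarith) (by norm_num)
          gcongr; linarith
        _ = _ := by ring
    nlinarith

theorem bump_aux {E : Type*} [NormedAddCommGroup E] [InnerProductSpace ℝ E] [CompleteSpace E]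
    (e x0 : E) (C R : ℝ) (hC : 0 < C) (hR : 0 < R) (hCR : C * R ≤ 1 / 2) :
    ∃ (h : E → ℝ) (h' : E → E), (∀ x, HasGradientAt h (h' x) x) ∧ h x0 = 0 ∧ h' x0 = e ∧
      (∀ x, R ≤ ‖x - x0‖ → h x = 0 ∧ h' x = 0) ∧
      (∀ x, |h x| ≤ ‖e‖ * ‖x - x0‖) ∧
      (∀ x, ‖x - x0‖ < R → ∃ t : ℝ, 0 ≤ t ∧ t ≤ 1 ∧
        C * (‖x - x0‖ + ‖h' x - t • e‖) ≤ 1 - t) := by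
  obtain ⟨k, k', hkc, hk0, hkd, hk01, hkR, hkb⟩ :=
    radial_aux C (2 * ‖e‖) R hC (by positivity) hR hCR
  have hkk : ∀ x, 0 ≤ k (‖x - x0‖ ^ 2) ∧ k (‖x - x0‖ ^ 2) ≤ 1 := by
    intro x
    rcases hk01 (‖x - x0‖ ^ 2) with h | h
    · exact h
    · exact absurd h (not_lt.mpr (by positivity))
  classical
  refine ⟨fun x => inner ℝ e (x - x0) * k (‖x - x0‖ ^ 2),
    fun x => if x = x0 then e else k (‖x - x0‖ ^ 2) • e +
      (inner ℝ e (x - x0) * (2 * k' (‖x - x0‖ ^ 2))) • (x - x0), ?_, ?_, ?_, ?_, ?_, ?_⟩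
  · intro x
    by_cases hx : x = x0
    · subst hx
      simp only [if_true]
      rw [hasGradientAt_iff_isLittleO]
      simp only [sub_self, inner_zero_right, zero_mul, sub_zero]
      have h1 : (fun y : E => inner ℝ e (y - x) * k (‖y - x‖ ^ 2) - inner ℝ e (y - x))
          = fun y => inner ℝ e (y - x) * (k (‖y - x‖ ^ 2) - 1) := by
        funext y; ring
      rw [h1]
      have h2 : (fun y : E => (inner ℝ e (y - x) : ℝ)) =O[nhds x] fun y => ‖y - x‖ := by
        refine Asymptotics.IsBigO.of_bound ‖e‖ (Filter.Eventually.of_forall fun y => ?_)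
        rw [norm_norm]
        exact norm_inner_le_norm _ _
      have h3 : (fun y : E => k (‖y - x‖ ^ 2) - 1) =o[nhds x] fun _ => (1 : ℝ) := by
        rw [Asymptotics.isLittleO_one_iff]
        have : Continuous fun y : E => k (‖y - x‖ ^ 2) - 1 := by fun_prop
        have h4 := this.tendsto x
        simpa [hk0] using h4
      have h5 := h2.mul_isLittleO h3
      simp only [mul_one] at h5
      exact h5.of_norm_right
    · simp only [hx, if_false]
      have hpos : 0 < ‖x - x0‖ ^ 2 := by
        have : 0 < ‖x - x0‖ := norm_pos_iff.mpr (sub_ne_zero.mpr hx)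
        positivity
      rw [hasGradientAt_iff_hasFDerivAt]
      have d0 : HasFDerivAt (fun x : E => x - x0) (ContinuousLinearMap.id ℝ E) x :=
        (hasFDerivAt_id x).sub_const x0
      have d1 : HasFDerivAt (fun x : E => (inner ℝ e (x - x0) : ℝ)) (innerSL ℝ e) x := by
        have h := (innerSL ℝ e).hasFDerivAt (x := x - x0)
        have := h.comp x d0
        rw [ContinuousLinearMap.comp_id] at this
        exact this
      have d2 := d0.norm_sq
      have d3 := (hkd _ hpos).comp_hasFDerivAt x d2
      have d4 := d1.mul d3
      refine d4.congr_fderiv ?_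
      ext y
      simp [inner_add_left, inner_smul_left]
      ring
  · simp
  · simp
  · intro x hx
    have h1 := hkR (‖x - x0‖ ^ 2) (by gcongr)
    have : x ≠ x0 := by
      rintro rfl
      simp at hx
      linarith
    simp [this, h1.1, h1.2]
  · intro x
    obtain ⟨a, b⟩ := hkk x
    simp only [abs_mul, abs_of_nonneg a]
    calc _ ≤ (‖e‖ * ‖x - x0‖) * 1 := by
          gcongr
          exact abs_real_inner_le_norm _ _
      _ = _ := by ring
  · intro x hxR
    by_cases hx : x = x0
    · exact ⟨1, by norm_num, by norm_num, by simp [hx]⟩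
    · have hpos : 0 < ‖x - x0‖ := norm_pos_iff.mpr (sub_ne_zero.mpr hx)
      refine ⟨k (‖x - x0‖ ^ 2), (hkk x).1, (hkk x).2, ?_⟩
      simp only [hx, if_false, add_sub_cancel_left]
      refine le_trans ?_ (hkb _ hpos hxR)
      gcongr
      rw [norm_smul, Real.norm_eq_abs, abs_mul, abs_mul, abs_two]
      calc _ ≤ (‖e‖ * ‖x - x0‖) * (2 * |k' (‖x - x0‖ ^ 2)|) * ‖x - x0‖ := by
            gcongr
            exact abs_real_inner_le_norm _ _
        _ = _ := by ring

/-- membership in the cap -/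
def InCap {E : Type*} [NormedAddCommGroup E] [InnerProductSpace ℝ E] (μ L : ℝ) (v g : E) : Prop :=
  ‖g‖ ≤ L * ‖v‖ ∧ μ * ‖v‖ ^ 2 ≤ inner ℝ g v

theorem cap_aux {E : Type*} [NormedAddCommGroup E] [InnerProductSpace ℝ E]
    (μ L : ℝ) (hμ : 0 < μ) (hL : μ ≤ L) (v0 v g η : E) (t r : ℝ) (h : InCap μ L v0 g)
    (hr : ‖v - v0‖ ≤ r) (hra : r ≤ ‖v0‖) (ht : 0 ≤ t) (ht1 : t ≤ 1)
    (hb : (6 * L + 1) * (r + ‖η‖) ≤ (1 - t) * ((L - μ) / 2 * ‖v0‖)) :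
    InCap μ L v (((μ + L) / 2) • v + (t • (g - ((μ + L) / 2) • v0) + η)) := by
  obtain ⟨h1, h2⟩ := h
  set a := ‖v0‖ with ha
  set c := (μ + L) / 2 with hc
  have ha0 : 0 ≤ a := norm_nonneg _
  have hr0 : 0 ≤ r := (norm_nonneg _).trans hr
  have hη := norm_nonneg η
  have hc0 : 0 < c := by rw [hc]; linarith
  obtain ⟨z, rfl⟩ : ∃ z, v = v0 + z := ⟨v - v0, by abel⟩
  rw [add_sub_cancel_left] at hr
  have hG : c • (v0 + z) + (t • (g - c • v0) + η) = t • g + ((1 - t) * c) • v0 + (c • z + η) := by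
    module
  rw [hG]
  have hδ : ‖c • z + η‖ ≤ c * r + ‖η‖ := by
    refine (norm_add_le _ _).trans ?_
    rw [norm_smul, Real.norm_of_nonneg hc0.le]
    gcongr
  set δ := c • z + η
  have hv1 : a - r ≤ ‖v0 + z‖ := by
    have := norm_sub_le (v0 + z) z
    rw [add_sub_cancel_right] at this
    linarith
  have hv2 : ‖v0 + z‖ ≤ a + r := (norm_add_le _ _).trans (by linarith)
  have hb2 : 6 * L * r + ‖η‖ ≤ (1 - t) * ((L - μ) / 2 * a) := by nlinarith
  have hcL : c ≤ L := by rw [hc]; linarith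
  have hn : ‖t • g + ((1 - t) * c) • v0 + δ‖ ≤ t * (L * a) + (1 - t) * c * a + (c * r + ‖η‖) := by
    refine (norm_add_le _ _).trans (add_le_add ((norm_add_le _ _).trans (add_le_add ?_ ?_)) hδ)
    · rw [norm_smul, Real.norm_of_nonneg ht]; gcongr
    · rw [norm_smul, Real.norm_of_nonneg (mul_nonneg (by linarith) hc0.le)]
  have hcr : c * r ≤ L * r := by gcongr
  have hμr : μ * r ≤ L * r := by gcongr
  have hLr : 0 ≤ L * r := by apply mul_nonneg _ hr0; linarith
  have hn2 : ‖t • g + ((1 - t) * c) • v0 + δ‖ ≤ L * ‖v0 + z‖ := by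
    have : L * (a - r) ≤ L * ‖v0 + z‖ := by gcongr; linarith
    have e : t * (L * a) + (1 - t) * c * a = L * a - (1 - t) * ((L - μ) / 2 * a) := by
      rw [hc]; ring
    linarith
  refine ⟨hn2, ?_⟩
  rw [inner_add_right]
  have hz : -(L * (a + r) * r) ≤ inner ℝ (t • g + ((1 - t) * c) • v0 + δ) z := by
    have := abs_real_inner_le_norm (t • g + ((1 - t) * c) • v0 + δ) z
    have h3 : ‖t • g + ((1 - t) * c) • v0 + δ‖ * ‖z‖ ≤ L * (a + r) * r := by
      have : L * ‖v0 + z‖ ≤ L * (a + r) := by gcongr; linarith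
      apply mul_le_mul (hn2.trans this) hr (norm_nonneg _)
      exact mul_nonneg (by linarith) (by linarith)
    have := neg_abs_le (inner ℝ (t • g + ((1 - t) * c) • v0 + δ) z : ℝ)
    linarith
  have hv : t * (μ * a ^ 2) + (1 - t) * c * a ^ 2 - (c * r + ‖η‖) * a
      ≤ inner ℝ (t • g + ((1 - t) * c) • v0 + δ) v0 := by
    rw [inner_add_left, inner_add_left, inner_smul_left, inner_smul_left,
      real_inner_self_eq_norm_sq]
    simp only [conj_trivial]
    have h4 : t * (μ * a ^ 2) ≤ t * inner ℝ g v0 := by gcongr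
    have h5 := abs_real_inner_le_norm δ v0
    have h6 : ‖δ‖ * ‖v0‖ ≤ (c * r + ‖η‖) * a := by gcongr
    have := neg_abs_le (inner ℝ δ v0 : ℝ)
    linarith
  have hsq : μ * ‖v0 + z‖ ^ 2 ≤ μ * (a + r) ^ 2 := by gcongr
  have e : t * (μ * a ^ 2) + (1 - t) * c * a ^ 2
      = μ * a ^ 2 + (1 - t) * ((L - μ) / 2 * a) * a := by
    rw [hc]; ring
  have hb3 : (6 * L * r + ‖η‖) * a ≤ (1 - t) * ((L - μ) / 2 * a) * a := by gcongr
  have q1 : c * r * a ≤ L * r * a := by gcongr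
  have q2 : L * r * r ≤ L * r * a := by gcongr
  have q3 : μ * r * a ≤ L * r * a := by gcongr
  have q4 : μ * r * r ≤ μ * r * a := by gcongr
  nlinarith

theorem point_aux {E : Type*} [NormedAddCommGroup E] [InnerProductSpace ℝ E] [CompleteSpace E]
    (μ L : ℝ) (hμ : 0 < μ) (hL : μ ≤ L) (v : E → E) (hv : ∀ x y, ‖v x - v y‖ ≤ ‖x - y‖)
    (x0 g : E) (hg : InCap μ L (v x0) g) (R : ℝ) (hR : 0 < R) :
    ∃ (h : E → ℝ) (h' : E → E), (∀ x, HasGradientAt h (h' x) x) ∧ h x0 = 0 ∧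
      h' x0 = g - ((μ + L) / 2) • v x0 ∧
      (∀ x, R ≤ ‖x - x0‖ → h x = 0 ∧ h' x = 0) ∧
      (∀ x, InCap μ L (v x) (((μ + L) / 2) • v x + h' x)) ∧
      (∀ x, v x = 0 → h x = 0) ∧
      (∀ x, v x ≠ 0 → 0 < (μ + L) / 4 * ‖v x‖ ^ 2 + h x) := by
  have hbase : ∀ w : E, InCap μ L w (((μ + L) / 2) • w) := by
    intro w
    constructor
    · rw [norm_smul, Real.norm_of_nonneg (by linarith)]
      gcongr; linarith
    · rw [inner_smul_left, real_inner_self_eq_norm_sq]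
      simp only [conj_trivial]
      gcongr; linarith
  have hpos : ∀ w : E, w ≠ 0 → 0 < (μ + L) / 4 * ‖w‖ ^ 2 := by
    intro w hw
    have := norm_pos_iff.mpr hw
    have : 0 < μ + L := by linarith
    positivity
  by_cases he : g - ((μ + L) / 2) • v x0 = 0
  · refine ⟨fun _ => 0, fun _ => 0, fun x => hasGradientAt_const _ _, rfl, he.symm, ?_, ?_, ?_, ?_⟩
    · simp
    · intro x; simpa using hbase (v x)
    · simp
    · intro x hx; simpa using hpos _ hx
  have ha : 0 < ‖v x0‖ := by
    rw [norm_pos_iff]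
    intro h0
    apply he
    have := hg.1
    rw [h0] at this ⊢
    simpa using this
  have hLμ : μ < L := by
    refine lt_of_le_of_ne hL ?_
    rintro rfl
    apply he
    rw [← norm_eq_zero, ← sq_eq_zero_iff]
    apply le_antisymm _ (by positivity)
    have e1 : (μ + μ) / 2 = μ := by ring
    rw [e1, norm_sub_sq_real, inner_smul_right, norm_smul, Real.norm_of_nonneg hμ.le]
    have h1 : ‖g‖ ^ 2 ≤ (μ * ‖v x0‖) ^ 2 := by gcongr; exact hg.1
    have h2 := mul_le_mul_of_nonneg_left hg.2 hμ.le
    nlinarith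
  set e := g - ((μ + L) / 2) • v x0 with hedef
  set a := ‖v x0‖ with hadef
  have hee : 0 < ‖e‖ := norm_pos_iff.mpr he
  set C := (6 * L + 1) / ((L - μ) / 2 * a) with hCdef
  have hL0 : 0 < L := hμ.trans hLμ
  have hD : 0 < L - μ := by linarith
  have hC : 0 < C := by positivity
  obtain ⟨ρ, hρ, hρ1, hρ2, hρ3, hρ4⟩ : ∃ ρ, 0 < ρ ∧ ρ ≤ R ∧ C * ρ ≤ 1 / 2 ∧ ρ ≤ a / 2 ∧
      ‖e‖ * ρ ≤ (μ + L) / 16 * a ^ 2 := by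
    refine ⟨min (min R (1 / (2 * C))) (min (a / 2) ((μ + L) / 16 * a ^ 2 / ‖e‖)), by positivity,
      (min_le_left _ _).trans (min_le_left _ _), ?_, (min_le_right _ _).trans (min_le_left _ _), ?_⟩
    · rw [← le_div_iff₀' hC]
      refine ((min_le_left _ _).trans (min_le_right _ _)).trans (le_of_eq ?_)
      field_simp
    · rw [← le_div_iff₀' hee]
      exact (min_le_right _ _).trans (min_le_right _ _)
  obtain ⟨h, h', hd, h0, h0', hout, habs, hin⟩ := bump_aux e x0 C ρ hC hρ hρ2
  have hva : ∀ x, ‖x - x0‖ < ρ → a / 2 < ‖v x‖ := by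
    intro x hx
    have := hv x x0
    have h2 := norm_sub_norm_le (v x0) (v x)
    rw [norm_sub_rev] at h2
    linarith
  refine ⟨h, h', hd, h0, h0', fun x hx => hout x (hρ1.trans hx), ?_, ?_, ?_⟩
  · intro x
    rcases le_or_gt ρ ‖x - x0‖ with hx | hx
    · rw [(hout x hx).2, add_zero]; exact hbase _
    · obtain ⟨t, ht0, ht1, hb⟩ := hin x hx
      have := cap_aux μ L hμ hL (v x0) (v x) g (h' x - t • e) t ‖x - x0‖ hg (hv x x0)
        (by linarith) ht0 ht1 ?_
      · rw [← hedef, add_sub_cancel] at this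
        exact this
      · rw [hCdef, div_mul_eq_mul_div, div_le_iff₀ (by positivity)] at hb
        exact hb
  · intro x hx
    rcases le_or_gt ρ ‖x - x0‖ with hx' | hx'
    · exact (hout x hx').1
    · have := hva x hx'
      rw [hx, norm_zero] at this
      linarith
  · intro x hx
    rcases le_or_gt ρ ‖x - x0‖ with hx' | hx'
    · rw [(hout x hx').1, add_zero]; exact hpos _ hx
    · have h1 := hva x hx'
      have h2 := habs x
      have h3 : ‖e‖ * ‖x - x0‖ ≤ ‖e‖ * ρ := by gcongr
      have h4 := neg_abs_le (h x)
      have h5 : (μ + L) / 4 * (a / 2) ^ 2 < (μ + L) / 4 * ‖v x‖ ^ 2 := by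
        have : 0 < μ + L := by linarith
        gcongr
      nlinarith

theorem proj_inner {E : Type*} [NormedAddCommGroup E] [InnerProductSpace ℝ E]
    (X : Set E) (hX : Convex ℝ X) (p : E → E)
    (hp : ∀ x, p x ∈ X ∧ ∀ y ∈ X, ‖x - p x‖ ≤ ‖x - y‖) (x z : E) (hz : z ∈ X) :
    inner ℝ (x - p x) (z - p x) ≤ 0 := by
  refine (norm_eq_iInf_iff_real_inner_le_zero hX (hp x).1).1 ?_ z hz
  have : Nonempty X := ⟨⟨_, (hp x).1⟩⟩
  apply le_antisymm
  · exact le_ciInf fun w => (hp x).2 w w.2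
  · exact ciInf_le (f := fun w : X => ‖x - w‖) ⟨0, by rintro _ ⟨w, rfl⟩; positivity⟩ ⟨p x, (hp x).1⟩

theorem proj_mono {E : Type*} [NormedAddCommGroup E] [InnerProductSpace ℝ E]
    (X : Set E) (hX : Convex ℝ X) (p : E → E)
    (hp : ∀ x, p x ∈ X ∧ ∀ y ∈ X, ‖x - p x‖ ≤ ‖x - y‖) (x y : E) :
    ‖(x - p x) - (y - p y)‖ ^ 2 ≤ inner ℝ ((x - p x) - (y - p y)) (x - y) := by
  have h1 := proj_inner X hX p hp x (p y) (hp y).1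
  have h2 := proj_inner X hX p hp y (p x) (hp x).1
  have e : x - y = ((x - p x) - (y - p y)) + (p x - p y) := by abel
  have h3 : inner ℝ (x - p x) (p x - p y) = - inner ℝ (x - p x) (p y - p x) := by
    rw [← inner_neg_right, neg_sub]
  rw [e, inner_add_right, real_inner_self_eq_norm_sq, inner_sub_left _ _ (p x - p y), h3]
  linarith

theorem proj_lip {E : Type*} [NormedAddCommGroup E] [InnerProductSpace ℝ E]
    (X : Set E) (hX : Convex ℝ X) (p : E → E)
    (hp : ∀ x, p x ∈ X ∧ ∀ y ∈ X, ‖x - p x‖ ≤ ‖x - y‖) (x y : E) :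
    ‖(x - p x) - (y - p y)‖ ≤ ‖x - y‖ := by
  have h1 := proj_mono X hX p hp x y
  have h2 := real_inner_le_norm ((x - p x) - (y - p y)) (x - y)
  by_contra! h
  have : 0 < ‖(x - p x) - (y - p y)‖ := (norm_nonneg _).trans_lt h
  nlinarith

theorem dist_grad {E : Type*} [NormedAddCommGroup E] [InnerProductSpace ℝ E] [CompleteSpace E]
    (X : Set E) (hX : Convex ℝ X) (p : E → E)
    (hp : ∀ x, p x ∈ X ∧ ∀ y ∈ X, ‖x - p x‖ ≤ ‖x - y‖) (x : E) :
    HasGradientAt (fun x => ‖x - p x‖ ^ 2) ((2 : ℝ) • (x - p x)) x := by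
  rw [hasGradientAt_iff_isLittleO]
  have h1 : (fun y => ‖y - p y‖ ^ 2 - ‖x - p x‖ ^ 2 - inner ℝ ((2 : ℝ) • (x - p x)) (y - x))
      =O[nhds x] fun y => ‖y - x‖ ^ 2 := by
    refine Asymptotics.IsBigO.of_bound 1 (Filter.Eventually.of_forall fun y => ?_)
    rw [norm_pow, norm_norm, one_mul, Real.norm_eq_abs, abs_le, inner_smul_left]
    simp only [conj_trivial]
    constructor
    · have a1 : ‖x - p x‖ ^ 2 ≤ ‖x - p y‖ ^ 2 := by
        gcongr; exact (hp x).2 _ (hp y).1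
      have e : x - p y = (y - p y) - (y - x) := by abel
      rw [e, norm_sub_sq_real (y - p y)] at a1
      have a2 := proj_mono X hX p hp y x
      rw [inner_sub_left] at a2
      have := sq_nonneg ‖y - p y - (x - p x)‖
      linarith
    · have a1 : ‖y - p y‖ ^ 2 ≤ ‖y - p x‖ ^ 2 := by
        gcongr; exact (hp y).2 _ (hp x).1
      have e : y - p x = (x - p x) + (y - x) := by abel
      rw [e, norm_add_sq_real] at a1
      linarith
  refine h1.trans_isLittleO ?_
  exact Asymptotics.isLittleO_pow_sub_sub x (by norm_num)

/-- Sufficient interpolation conditions with function values for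
`RSI⁻(μ) ∩ EB⁺(L)`. -/
theorem stmt_8 {d : ℕ} (hd : 1 ≤ d) (n : ℕ) (μ L : ℝ) (hμ : 0 < μ) (hL : 0 < L)
    (x : Fin (n + 1) → EuclideanSpace ℝ (Fin d))
    (fv : Fin (n + 1) → ℝ)
    (g : Fin (n + 1) → EuclideanSpace ℝ (Fin d))
    (hdist : Function.Injective x)
    (h : ∃ X : Set (EuclideanSpace ℝ (Fin d)), X.Nonempty ∧ IsClosed X ∧ Convex ℝ X ∧
      ∃ p, IsProjOn p X ∧ ∀ i,
        ‖g i‖ ≤ L * ‖x i - p (x i)‖ ∧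
        μ * ‖x i - p (x i)‖ ^ 2 ≤ ⟪g i, x i - p (x i)⟫ ∧
        fv i = (μ + L) / 4 * ‖x i - p (x i)‖ ^ 2) :
    ∃ f : EuclideanSpace ℝ (Fin d) → ℝ, MemRSIEB μ L f ∧
      ∀ i, gradient f (x i) = g i ∧ f (x i) = fv i := by
  obtain ⟨X, hXne, hXc, hXconv, p, hp, hi⟩ := h
  by_cases hall : ∀ i, x i - p (x i) = 0
  · have hg0 : ∀ y : EuclideanSpace ℝ (Fin d), gradient (fun _ => (0 : ℝ)) y = 0 :=
      fun y => (hasGradientAt_const y (0 : ℝ)).gradient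
    refine ⟨fun _ => 0, ⟨by fun_prop, ?_⟩, ?_⟩
    · have : argminSet (fun _ : EuclideanSpace ℝ (Fin d) => (0 : ℝ)) = Set.univ := by
        ext; simp [argminSet]
      rw [this]
      refine ⟨⟨0, trivial⟩, isClosed_univ, convex_univ, id, fun x => ⟨trivial, by simp⟩, ?_, ?_⟩
      · simp
      · intro y; rw [hg0]; simp
    · intro i
      obtain ⟨h1, h2, h3⟩ := hi i
      rw [hall i] at h1 h3
      refine ⟨?_, ?_⟩
      · rw [hg0]
        have : ‖g i‖ ≤ 0 := by simpa using h1
        exact (norm_le_zero_iff.mp this).symm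
      · rw [h3]; simp
  push Not at hall
  obtain ⟨i0, hi0⟩ := hall
  have hμL : μ ≤ L := by
    obtain ⟨h1, h2, -⟩ := hi i0
    have h3 := real_inner_le_norm (g i0) (x i0 - p (x i0))
    have h4 : 0 < ‖x i0 - p (x i0)‖ := norm_pos_iff.mpr hi0
    have h5 : ‖g i0‖ * ‖x i0 - p (x i0)‖ ≤ L * ‖x i0 - p (x i0)‖ * ‖x i0 - p (x i0)‖ := by gcongr
    by_contra! h
    have : L * ‖x i0 - p (x i0)‖ ^ 2 < μ * ‖x i0 - p (x i0)‖ ^ 2 := by gcongr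
    nlinarith
  obtain ⟨R, hR, hRd⟩ : ∃ R > 0, ∀ i j, i ≠ j → 2 * R ≤ ‖x i - x j‖ := by
    have hfin : ∀ i j, ∃ r > 0, i ≠ j → 2 * r ≤ ‖x i - x j‖ := by
      intro i j
      by_cases hij : i = j
      · exact ⟨1, one_pos, fun h => absurd hij h⟩
      · have : 0 < ‖x i - x j‖ := norm_pos_iff.mpr (sub_ne_zero.mpr (hdist.ne hij))
        exact ⟨‖x i - x j‖ / 2, by positivity, fun _ => by linarith⟩
    choose r hr hr2 using hfin
    obtain ⟨m, hm⟩ := Finite.exists_min (fun q : Fin (n + 1) × Fin (n + 1) => r q.1 q.2)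
    exact ⟨r m.1 m.2, hr _ _, fun i j hij => by linarith [hm (i, j), hr2 i j hij]⟩
  set v : EuclideanSpace ℝ (Fin d) → EuclideanSpace ℝ (Fin d) := fun y => y - p y with hvdef
  have hpt := fun i => point_aux μ L hμ hμL v (proj_lip X hXconv p hp) (x i) (g i)
    ⟨(hi i).1, (hi i).2.1⟩ R hR
  choose H H' hd1 hz hz' hout hcap hX0 hpos using hpt
  have hone : ∀ y, ∃ i, ∀ j, j ≠ i → H j y = 0 ∧ H' j y = 0 := by
    intro y
    by_cases hy : ∃ i, ‖y - x i‖ < R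
    · obtain ⟨i, hyi⟩ := hy
      refine ⟨i, fun j hj => hout j y ?_⟩
      have h1 := hRd j i hj
      have h2 := norm_sub_le (y - x i) (y - x j)
      rw [sub_sub_sub_cancel_left] at h2
      linarith
    · push Not at hy
      exact ⟨0, fun j _ => hout j y (hy j)⟩
  have hsum : ∀ y, ∃ i, ∑ j, H j y = H i y ∧ ∑ j, H' j y = H' i y := by
    intro y
    obtain ⟨i, h⟩ := hone y
    exact ⟨i, Finset.sum_eq_single i (fun j _ hj => (h j hj).1) (by simp),
      Finset.sum_eq_single i (fun j _ hj => (h j hj).2) (by simp)⟩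
  have hsumx : ∀ i, ∑ j, H j (x i) = H i (x i) ∧ ∑ j, H' j (x i) = H' i (x i) := by
    intro i
    have h : ∀ j, j ≠ i → H j (x i) = 0 ∧ H' j (x i) = 0 := fun j hj => hout j (x i) (by
      have := hRd i j hj.symm
      linarith)
    exact ⟨Finset.sum_eq_single i (fun j _ hj => (h j hj).1) (by simp),
      Finset.sum_eq_single i (fun j _ hj => (h j hj).2) (by simp)⟩
  set f : EuclideanSpace ℝ (Fin d) → ℝ := fun y => (μ + L) / 4 * ‖v y‖ ^ 2 + ∑ j, H j y with hf
  have hgrad : ∀ y, HasGradientAt f (((μ + L) / 2) • v y + ∑ j, H' j y) y := by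
    intro y
    have a1 := (dist_grad X hXconv p hp y).hasFDerivAt.const_mul ((μ + L) / 4)
    have a2 := HasFDerivAt.fun_sum (u := Finset.univ) (fun j _ => (hd1 j y).hasFDerivAt)
    rw [hasGradientAt_iff_hasFDerivAt]
    refine (a1.add a2).congr_fderiv ?_
    rw [map_add, map_sum]
    congr 1
    ext z
    simp [inner_smul_left, hvdef]
    ring
  have hg2 : ∀ y, gradient f y = ((μ + L) / 2) • v y + ∑ j, H' j y := fun y => (hgrad y).gradient
  have hvX : ∀ y, y ∈ X ↔ v y = 0 := by
    intro y
    constructor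
    · intro hy
      have := (hp y).2 y hy
      simpa using this
    · intro hy
      have : y = p y := sub_eq_zero.mp hy
      rw [this]; exact (hp y).1
  have hf0 : ∀ y, y ∈ X → f y = 0 := by
    intro y hy
    have hv0 := (hvX y).1 hy
    simp only [hf, hv0]
    rw [Finset.sum_eq_zero fun j _ => hX0 j y hv0]
    simp
  have hfpos : ∀ y, y ∉ X → 0 < f y := by
    intro y hy
    obtain ⟨i, h1, -⟩ := hsum y
    simp only [hf, h1]
    exact hpos i y (fun h => hy ((hvX y).2 h))
  have harg : argminSet f = X := by
    ext y
    simp only [argminSet, Set.mem_setOf_eq]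
    constructor
    · intro h
      by_contra hy
      obtain ⟨z, hzX⟩ := hXne
      have h1 := h z
      rw [hf0 z hzX] at h1
      linarith [hfpos y hy]
    · intro hy z
      rw [hf0 y hy]
      by_cases hzX : z ∈ X
      · rw [hf0 z hzX]
      · exact (hfpos z hzX).le
  refine ⟨f, ⟨fun y => (hgrad y).differentiableAt, ?_⟩, ?_⟩
  · rw [harg]
    refine ⟨hXne, hXc, hXconv, p, hp, ?_, ?_⟩
    · intro y
      obtain ⟨i, -, h2⟩ := hsum y
      rw [hg2, h2]
      exact (hcap i y).2
    · intro y
      obtain ⟨i, -, h2⟩ := hsum y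
      rw [hg2, h2]
      exact (hcap i y).1
  · intro i
    refine ⟨?_, ?_⟩
    · rw [hg2, (hsumx i).2, hz']; abel
    · simp only [hf]
      rw [(hsumx i).1, hz, add_zero, (hi i).2.2]
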